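/- For every fixed integer k ≥ 2, s(k+1, k) = s'(k+1, k) = 1/(k+1), the minimum in both cases being attained by the hypergraph with k+1 vertices and precisely one edge, of cardinality k. -/

import Mathlib

/-!
On `k + 1` vertices every member of `𝓔_k` contributes `1 / (k + 1)` to the sum. If `𝓔_k` is empty,
then the whole vertex set lies in `𝓔⁰_{k+1}` and contributes `1`, so the sum is always at least
`1 / (k + 1)` (`le_hSum`). For a single edge `E` of size `k` one has `𝓔_k = {E}`, and `𝓔⁰_{k+1}` is
empty because the only `(k + 1)`-set contains `E`, so the bound is attained (`hSum_single`).
A one-edge hypergraph is vacuously linear, hence the minimum is the same in both classes.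
-/

open Finset

/-- A hypergraph (edge set `𝓔` over vertex type `α`) is `q`-linear if any two
distinct edges intersect in fewer than `q` vertices. -/
def qLinear {α : Type*} [DecidableEq α] (q : ℕ) (𝓔 : Finset (Finset α)) : Prop :=
  ∀ E ∈ 𝓔, ∀ E' ∈ 𝓔, E ≠ E' → (E ∩ E').card < q

/-- `𝓔_k`: the family of `k`-element sets contained in some edge of `𝓔`. -/
def secE {α : Type*} [DecidableEq α] (k : ℕ) (𝓔 : Finset (Finset α)) :
    Finset (Finset α) :=
  𝓔.biUnion fun E => E.powersetCard k

/-- `𝓔⁰_{k+1}` (relative to vertex set `V`): the `(k+1)`-element subsets of `V`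
none of whose `k`-element subsets belongs to `𝓔_k`. -/
def zeroE {α : Type*} [DecidableEq α] (V : Finset α) (k : ℕ)
    (𝓔 : Finset (Finset α)) : Finset (Finset α) :=
  (V.powersetCard (k + 1)).filter fun F => ∀ G ∈ F.powersetCard k, G ∉ secE k 𝓔

/-- The YBLM-type sum `Σ_{S ∈ 𝓔_k ∪ 𝓔⁰_{k+1}} C(n,|S|)⁻¹` for a hypergraph on
`n` vertices. -/
noncomputable def hSum (n k : ℕ) (𝓔 : Finset (Finset (Fin n))) : ℝ :=
  ∑ S ∈ secE k 𝓔 ∪ zeroE Finset.univ k 𝓔, ((n.choose S.card : ℝ))⁻¹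

/-- `s(n,k)`: the minimum of `hSum n k 𝓔` over all `(k-1)`-linear hypergraphs
on `n` vertices. -/
noncomputable def sVal (n k : ℕ) : ℝ :=
  sInf {r : ℝ | ∃ 𝓔 : Finset (Finset (Fin n)), qLinear (k - 1) 𝓔 ∧ r = hSum n k 𝓔}

/-- `s'(n,k)`: the minimum of `hSum n k 𝓔` over all hypergraphs on `n`
vertices. -/
noncomputable def s'Val (n k : ℕ) : ℝ :=
  sInf {r : ℝ | ∃ 𝓔 : Finset (Finset (Fin n)), r = hSum n k 𝓔}

lemma mem_zeroE {α : Type*} [DecidableEq α] {V F : Finset α} {k : ℕ}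
    {𝓔 : Finset (Finset α)} : F ∈ zeroE V k 𝓔 ↔
      F ∈ V.powersetCard (k + 1) ∧ ∀ G ∈ F.powersetCard k, G ∉ secE k 𝓔 :=
  Finset.mem_filter

lemma le_hSum (k : ℕ) (𝓔 : Finset (Finset (Fin (k + 1)))) :
    1 / ((k : ℝ) + 1) ≤ hSum (k + 1) k 𝓔 := by
  have key : ∀ S ∈ secE k 𝓔 ∪ zeroE Finset.univ k 𝓔,
      (((k + 1).choose S.card : ℝ))⁻¹ ≤ hSum (k + 1) k 𝓔 := fun S hS =>
    Finset.single_le_sum (f := fun S : Finset (Fin (k + 1)) => (((k + 1).choose S.card : ℝ))⁻¹)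
      (fun _ _ => by positivity) hS
  rcases (secE k 𝓔).eq_empty_or_nonempty with h | ⟨S, hS⟩
  · have h1 := key Finset.univ (Finset.mem_union_right _ (by simp [mem_zeroE, h]))
    simp only [Finset.card_univ, Fintype.card_fin, Nat.choose_self, Nat.cast_one, inv_one] at h1
    refine le_trans ?_ h1
    rw [div_le_one (by positivity)]
    linarith [(Nat.cast_nonneg k : (0 : ℝ) ≤ k)]
  · have hc : S.card = k := by
      obtain ⟨E, -, hE⟩ := Finset.mem_biUnion.1 hS
      exact (Finset.mem_powersetCard.1 hE).2
    have h1 := key S (Finset.mem_union_left _ hS)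
    rw [hc, Nat.choose_succ_self_right] at h1
    simpa using h1

lemma hSum_single (k : ℕ) (E : Finset (Fin (k + 1))) (hE : E.card = k) :
    hSum (k + 1) k {E} = 1 / ((k : ℝ) + 1) := by
  have h1 : secE k {E} = {E} := by
    have h := Finset.powersetCard_self E
    rw [hE] at h
    simp [secE, h]
  have h2 : zeroE Finset.univ k {E} = ∅ := by
    refine Finset.eq_empty_of_forall_notMem fun F hF' => ?_
    obtain ⟨hF, hG⟩ := mem_zeroE.1 hF'
    have hFu : F = Finset.univ := by
      rw [← Finset.card_eq_iff_eq_univ, (Finset.mem_powersetCard.1 hF).2, Fintype.card_fin]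
    exact hG E (Finset.mem_powersetCard.2 ⟨hFu ▸ Finset.subset_univ E, hE⟩) (by simp [h1])
  simp [hSum, h1, h2, hE]

lemma qLinear_single {α : Type*} [DecidableEq α] (q : ℕ) (E : Finset α) :
    qLinear q ({E} : Finset (Finset α)) := by
  intro A hA B hB hne
  exact absurd ((Finset.mem_singleton.1 hA).trans (Finset.mem_singleton.1 hB).symm) hne

theorem s_at_k_plus_one (k : ℕ) (hk : 2 ≤ k) :
    sVal (k + 1) k = 1 / ((k : ℝ) + 1) ∧
    s'Val (k + 1) k = 1 / ((k : ℝ) + 1) ∧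
    ∀ E : Finset (Fin (k + 1)), E.card = k →
      qLinear (k - 1) ({E} : Finset (Finset (Fin (k + 1)))) ∧
      hSum (k + 1) k {E} = 1 / ((k : ℝ) + 1) := by
  obtain ⟨E, -, hE⟩ := Finset.exists_subset_card_eq
    (show k ≤ (Finset.univ : Finset (Fin (k + 1))).card by simp)
  refine ⟨IsLeast.csInf_eq ⟨⟨{E}, qLinear_single _ E, (hSum_single k E hE).symm⟩, ?_⟩,
    IsLeast.csInf_eq ⟨⟨{E}, (hSum_single k E hE).symm⟩, ?_⟩,
    fun E hE => ⟨qLinear_single _ E, hSum_single k E hE⟩⟩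
  · rintro r ⟨𝓔, -, rfl⟩
    exact le_hSum k 𝓔
  · rintro r ⟨𝓔, rfl⟩
    exact le_hSum k 𝓔
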